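/- arXiv:2310.10173 — 2 statements merged into one kernel-verified Lean document; each statement's English description precedes it below -/
import Mathlib

section
/- There exists a constant C > 0 such that for every ε ∈ (0,1) there exists a smooth function h_ε : (−1/(4ε), 1/(4ε)) → ℝ with the following properties: (i) (4/3)·h_ε(t)² + 2·h_ε′(t) = 12ε² for every t ∈ (−1/(4ε), −1/8] ∪ [1/8, 1/(4ε)); (ii) |(4/3)·h_ε(t)² + 2·h_ε′(t)| ≤ C·ε for every t ∈ [−1/8, 1/8]; (iii) h_ε′(t) < 0 for every t ∈ (−1/(4ε), 1/(4ε)); (iv) h_ε(t) → +∞ as t → (−1/(4ε))⁺ and h_ε(t) → −∞ as t → (1/(4ε))⁻; (v) h_ε(t) < 0 for every t ∈ [1/8, 1/(4ε)). -/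
open Filter Topology Set

/-- hyperbolic cotangent -/
noncomputable def cth (x : ℝ) : ℝ := Real.cosh x / Real.sinh x

lemma cth_neg (x : ℝ) : cth (-x) = - cth x := by
  simp [cth, div_neg]

lemma cth_sq {x : ℝ} (hx : x ≠ 0) : (cth x)^2 = 1 + 1 / (Real.sinh x)^2 := by
  have h : Real.sinh x ≠ 0 := by simpa using hx
  have := Real.cosh_sq x
  rw [cth]
  field_simp
  linarith

lemma cth_hasDerivAt {x : ℝ} (hx : x ≠ 0) : HasDerivAt cth (1 - (cth x)^2) x := by
  have h : Real.sinh x ≠ 0 := by simpa using hx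
  have := (Real.hasDerivAt_cosh x).div (Real.hasDerivAt_sinh x) h
  refine HasDerivAt.congr_deriv this ?_
  rw [cth]
  field_simp

lemma cth_pos {x : ℝ} (hx : 0 < x) : 0 < cth x :=
  div_pos (Real.cosh_pos x) (Real.sinh_pos_iff.2 hx)

lemma cth_lt_zero {x : ℝ} (hx : x < 0) : cth x < 0 := by
  have := cth_pos (x := -x) (by linarith)
  rw [cth_neg] at this
  linarith

lemma one_lt_cth_sq {x : ℝ} (hx : x ≠ 0) : 1 < (cth x)^2 := by
  have h : Real.sinh x ≠ 0 := by simpa using hx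
  rw [cth_sq hx]
  have : 0 < 1 / (Real.sinh x)^2 := by positivity
  linarith

lemma cth_le_five {x : ℝ} (hx : 1/4 ≤ x) : cth x ≤ 5 := by
  have h : x ≤ Real.sinh x := Real.self_le_sinh_iff.2 (by linarith)
  have h2 := cth_sq (x := x) (by linarith)
  have h3 : 1 / (Real.sinh x)^2 ≤ 16 := by
    rw [div_le_iff₀ (by nlinarith)]
    nlinarith
  nlinarith [cth_pos (x := x) (by linarith)]

lemma cth_contDiffAt {x : ℝ} (hx : x ≠ 0) : ContDiffAt ℝ (⊤ : ℕ∞) cth x := by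
  have h : Real.sinh x ≠ 0 := by simpa using hx
  exact Real.contDiff_cosh.contDiffAt.div Real.contDiff_sinh.contDiffAt h

lemma cth_tendsto : Tendsto cth (𝓝[>] 0) atTop := by
  have h1 : Tendsto Real.cosh (𝓝[>] 0) (𝓝 1) := by
    have := Real.continuous_cosh.tendsto 0
    rw [Real.cosh_zero] at this
    exact this.mono_left nhdsWithin_le_nhds
  have h2 : Tendsto Real.sinh (𝓝[>] 0) (𝓝[>] 0) := by
    refine tendsto_nhdsWithin_iff.2 ⟨?_, ?_⟩
    · have := Real.continuous_sinh.tendsto 0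
      rw [Real.sinh_zero] at this
      exact this.mono_left nhdsWithin_le_nhds
    · filter_upwards [self_mem_nhdsWithin] with x hx
      exact Real.sinh_pos_iff.2 hx
  exact h1.pos_mul_atTop one_pos (tendsto_inv_nhdsGT_zero.comp h2)

/-- the cutoff -/
noncomputable def cutf (t : ℝ) : ℝ := Real.smoothTransition (4 * t + 1/2)

lemma cutf_contDiff : ContDiff ℝ (⊤ : ℕ∞) cutf :=
  Real.smoothTransition.contDiff.comp (by fun_prop)

lemma cutf_hasDerivAt (t : ℝ) : HasDerivAt cutf (deriv cutf t) t :=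
  ((cutf_contDiff.differentiable (by simp)) t).hasDerivAt

lemma cutf_mono : Monotone cutf := fun a b h =>
  Real.smoothTransition.monotone (by linarith)

lemma cutf_zero {t : ℝ} (ht : t ≤ -(1/8)) : cutf t = 0 :=
  Real.smoothTransition.zero_of_nonpos (by linarith)

lemma cutf_one {t : ℝ} (ht : 1/8 ≤ t) : cutf t = 1 :=
  Real.smoothTransition.one_of_one_le (by linarith)

lemma cutf_nonneg (t : ℝ) : 0 ≤ cutf t := Real.smoothTransition.nonneg _
lemma cutf_le_one (t : ℝ) : cutf t ≤ 1 := Real.smoothTransition.le_one _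

lemma cutf_deriv_zero {t : ℝ} (ht : t ≤ -(1/8)) : deriv cutf t = 0 :=
  IsLocalMin.deriv_eq_zero (Eventually.of_forall fun x => by
    rw [cutf_zero ht]; exact cutf_nonneg x)

lemma cutf_deriv_one {t : ℝ} (ht : 1/8 ≤ t) : deriv cutf t = 0 :=
  IsLocalMax.deriv_eq_zero (Eventually.of_forall fun x => by
    rw [cutf_one ht]; exact cutf_le_one x)

lemma cutf_deriv_bdd : ∃ M, 0 ≤ M ∧ ∀ t ∈ Icc (-(1/8) : ℝ) (1/8), deriv cutf t ≤ M := by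
  have hc : Continuous (deriv cutf) := cutf_contDiff.continuous_deriv (by simp)
  obtain ⟨M, hM⟩ := isCompact_Icc.exists_bound_of_continuousOn
    (hc.continuousOn (s := Icc (-(1/8) : ℝ) (1/8)))
  refine ⟨|M|, abs_nonneg _, fun t ht => ?_⟩
  exact (le_abs_self _).trans ((hM t ht).trans (le_abs_self _))

/-- the function -/
noncomputable def hfun (ε t : ℝ) : ℝ :=
  3 * ε * ((1 - cutf t) * cth (2 * ε * t + 1/2) + cutf t * cth (2 * ε * t - 1/2))

lemma hfun_hasDerivAt (ε t : ℝ) (h1 : 2 * ε * t + 1/2 ≠ 0) (h2 : 2 * ε * t - 1/2 ≠ 0) :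
    HasDerivAt (hfun ε) (3 * ε * ((1 - cutf t) * (1 - cth (2 * ε * t + 1/2)^2) * (2 * ε)
      + cutf t * (1 - cth (2 * ε * t - 1/2)^2) * (2 * ε)
      + deriv cutf t * (cth (2 * ε * t - 1/2) - cth (2 * ε * t + 1/2)))) t := by
  have l : HasDerivAt (fun t => 2 * ε * t) (2 * ε) t := by
    simpa using (hasDerivAt_id t).const_mul (2 * ε)
  have a := (cth_hasDerivAt h1).comp t (l.add_const (1/2))
  have b := (cth_hasDerivAt h2).comp t (l.sub_const (1/2))
  have c := cutf_hasDerivAt t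
  have := (((c.const_sub 1).mul a).add (c.mul b)).const_mul (3 * ε)
  refine HasDerivAt.congr_deriv this ?_
  simp only [Function.comp]
  ring

lemma dom {ε t : ℝ} (hε : 0 < ε) (ht : t ∈ Ioo (-(1/(4*ε))) (1/(4*ε))) :
    0 < 2 * ε * t + 1/2 ∧ 2 * ε * t - 1/2 < 0 := by
  obtain ⟨h1, h2⟩ := ht
  have e : ε * (1/(4*ε)) = 1/4 := by field_simp
  have := mul_lt_mul_of_pos_left h1 hε
  have := mul_lt_mul_of_pos_left h2 hε
  constructor <;> nlinarith

/-- Existence of the auxiliary functions `h_ε` (Lemma 2.3 of Zhu): there is a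
universal constant `C > 0` such that for every `ε ∈ (0,1)` there is a smooth
function `h_ε` on `(−1/(4ε), 1/(4ε))` satisfying the ODE
`(4/3) h_ε² + 2 h_ε' = 12 ε²` outside `[−1/8, 1/8]`, the bound
`|(4/3) h_ε² + 2 h_ε'| ≤ C ε` on `[−1/8, 1/8]`, `h_ε' < 0`, blow-up `±∞` at the
endpoints, and `h_ε < 0` on `[1/8, 1/(4ε))`. -/
theorem stmt_0 :
    ∃ C : ℝ, 0 < C ∧ ∀ ε : ℝ, ε ∈ Set.Ioo (0 : ℝ) 1 →
      ∃ h : ℝ → ℝ,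
        ContDiffOn ℝ (⊤ : ℕ∞) h (Set.Ioo (-(1/(4*ε))) (1/(4*ε))) ∧
        (∀ t ∈ Set.Ioc (-(1/(4*ε))) (-(1/8) : ℝ) ∪ Set.Ico (1/8 : ℝ) (1/(4*ε)),
          (4/3) * (h t)^2 + 2 * deriv h t = 12 * ε^2) ∧
        (∀ t ∈ Set.Icc (-(1/8) : ℝ) (1/8),
          |(4/3) * (h t)^2 + 2 * deriv h t| ≤ C * ε) ∧
        (∀ t ∈ Set.Ioo (-(1/(4*ε))) (1/(4*ε)), deriv h t < 0) ∧
        Filter.Tendsto h (nhdsWithin (-(1/(4*ε))) (Set.Ioi (-(1/(4*ε))))) Filter.atTop ∧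
        Filter.Tendsto h (nhdsWithin (1/(4*ε)) (Set.Iio (1/(4*ε)))) Filter.atBot ∧
        (∀ t ∈ Set.Ico (1/8 : ℝ) (1/(4*ε)), h t < 0) := by
  obtain ⟨M, hM0, hM⟩ := cutf_deriv_bdd
  refine ⟨600 + 60 * M, by positivity, ?_⟩
  rintro ε ⟨hε, hε1⟩
  have he : 1/8 < 1/(4*ε) := one_div_lt_one_div_of_lt (by linarith) (by linarith)
  have hd : ∀ t ∈ Ioo (-(1/(4*ε))) (1/(4*ε)), deriv (hfun ε) t = _ := fun t ht =>
    (hfun_hasDerivAt ε t (dom hε ht).1.ne' (dom hε ht).2.ne).deriv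
  have h0 : ∀ t ≤ -(1/8), hfun ε t = 3 * ε * cth (2 * ε * t + 1/2) := fun t ht => by
    simp [hfun, cutf_zero ht]
  have h1 : ∀ t, 1/8 ≤ t → hfun ε t = 3 * ε * cth (2 * ε * t - 1/2) := fun t ht => by
    simp [hfun, cutf_one ht]
  have e : ε * (1/(4*ε)) = 1/4 := by field_simp
  refine ⟨hfun ε, ?_, ?_, ?_, ?_, ?_, ?_, ?_⟩
  · intro t ht
    obtain ⟨p, q⟩ := dom hε ht
    have a : ContDiffAt ℝ (⊤ : ℕ∞) (fun t => cth (2 * ε * t + 1/2)) t :=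
      (cth_contDiffAt p.ne').comp t (f := fun t => 2 * ε * t + 1/2) (by fun_prop)
    have b : ContDiffAt ℝ (⊤ : ℕ∞) (fun t => cth (2 * ε * t - 1/2)) t :=
      (cth_contDiffAt q.ne).comp t (f := fun t => 2 * ε * t - 1/2) (by fun_prop)
    have c : ContDiffAt ℝ (⊤ : ℕ∞) cutf t := cutf_contDiff.contDiffAt
    exact (contDiffAt_const.mul (((contDiffAt_const.sub c).mul a).add
      (c.mul b))).contDiffWithinAt
  · rintro t (⟨p, q⟩ | ⟨p, q⟩)
    · rw [hd t ⟨p, by linarith⟩, h0 t q, cutf_zero q, cutf_deriv_zero q]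
      ring
    · rw [hd t ⟨by linarith, q⟩, h1 t p, cutf_one p, cutf_deriv_one p]
      ring
  · intro t ht
    have ht' := ht
    obtain ⟨p, q⟩ := ht'
    rw [hd t ⟨by linarith, by linarith⟩, hfun]
    have hA : 1/4 ≤ 2 * ε * t + 1/2 := by nlinarith
    have hB : 1/4 ≤ -(2 * ε * t - 1/2) := by nlinarith
    have A0 := cth_pos (lt_of_lt_of_le (by norm_num) hA)
    have A1 := cth_le_five hA
    have B0 := cth_pos (lt_of_lt_of_le (by norm_num) hB)
    have B1 := cth_le_five hB
    rw [cth_neg] at B0 B1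
    have D0 := cutf_mono.deriv_nonneg (x := t)
    have D1 := hM t ht
    have f0 := cutf_nonneg t
    have f1 := cutf_le_one t
    generalize cth (2 * ε * t + 1/2) = A at *
    generalize cth (2 * ε * t - 1/2) = B at *
    generalize deriv cutf t = D at *
    generalize cutf t = f at *
    have g1 : |(1 - f) * A + f * B| ≤ 5 := by
      rw [abs_le]; constructor <;> nlinarith
    have g1' : ((1 - f) * A + f * B)^2 ≤ 25 := by
      rw [← sq_abs]; nlinarith [abs_nonneg ((1 - f) * A + f * B)]
    have gA : A^2 ≤ 25 := by nlinarith
    have gB : B^2 ≤ 25 := by nlinarith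
    have g2 : |(1 - f) * (1 - A^2) + f * (1 - B^2)| ≤ 25 := by
      rw [abs_le]; constructor <;> nlinarith [sq_nonneg A, sq_nonneg B]
    have g3 : |D * (B - A)| ≤ M * 10 := by
      rw [abs_mul, abs_of_nonneg D0]
      exact mul_le_mul D1 (by rw [abs_le]; constructor <;> linarith) (abs_nonneg _) hM0
    rw [abs_le] at g2 g3 ⊢
    have ee : ε^2 ≤ ε := by nlinarith
    have e2 : 0 < ε^2 := by positivity
    have k1 := mul_le_mul_of_nonneg_left g1' e2.le
    have k0 := mul_nonneg e2.le (sq_nonneg ((1 - f) * A + f * B))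
    have k2 := mul_le_mul_of_nonneg_left g2.1 e2.le
    have k3 := mul_le_mul_of_nonneg_left g2.2 e2.le
    have k4 := mul_le_mul_of_nonneg_left g3.1 hε.le
    have k5 := mul_le_mul_of_nonneg_left g3.2 hε.le
    have key : 4 / 3 * (3 * ε * ((1 - f) * A + f * B)) ^ 2 + 2 * (3 * ε * ((1 - f) * (1 - A ^ 2) * (2 * ε) + f * (1 - B ^ 2) * (2 * ε) + D * (B - A))) = 12 * (ε^2 * ((1 - f) * A + f * B)^2) + 12 * (ε^2 * ((1 - f) * (1 - A^2) + f * (1 - B^2))) + 6 * (ε * (D * (B - A))) := by ring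
    rw [key]
    have : 0 ≤ ε * M := by positivity
    constructor <;> linarith
  · intro t ht
    rw [hd t ht]
    obtain ⟨p, q⟩ := dom hε ht
    have A0 := cth_pos p
    have B0 := cth_lt_zero q
    have A1 := one_lt_cth_sq p.ne'
    have B1 := one_lt_cth_sq q.ne
    have D0 := cutf_mono.deriv_nonneg (x := t)
    have f0 := cutf_nonneg t
    have f1 := cutf_le_one t
    generalize cth (2 * ε * t + 1/2) = A at *
    generalize cth (2 * ε * t - 1/2) = B at *
    generalize deriv cutf t = D at *
    generalize cutf t = f at *
    have g2 : (1 - f) * (1 - A^2) + f * (1 - B^2) < 0 := by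
      rcases f0.eq_or_lt with h | h
      · subst h; linarith
      · nlinarith [mul_pos h (sub_pos.2 B1), mul_nonneg (sub_nonneg.2 f1) (sub_pos.2 A1).le]
    have g3 : D * (B - A) ≤ 0 := mul_nonpos_of_nonneg_of_nonpos D0 (by linarith)
    refine mul_neg_of_pos_of_neg (by positivity) ?_
    nlinarith [mul_pos hε (neg_pos.2 g2)]
  · have l : Tendsto (fun t => 2 * ε * t + 1/2) (𝓝[>] (-(1/(4*ε)))) (𝓝[>] 0) := by
      refine tendsto_nhdsWithin_iff.2 ⟨?_, ?_⟩
      · have : Continuous (fun t => 2 * ε * t + 1/2) := by fun_prop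
        have := this.tendsto (-(1/(4*ε)))
        rw [show 2 * ε * (-(1/(4*ε))) + 1/2 = 0 by linarith] at this
        exact this.mono_left nhdsWithin_le_nhds
      · filter_upwards [self_mem_nhdsWithin] with t ht
        have := mul_lt_mul_of_pos_left (mem_Ioi.1 ht) hε
        simp only [mem_Ioi]
        nlinarith
    refine ((cth_tendsto.comp l).const_mul_atTop (show 0 < 3 * ε by positivity)).congr' ?_
    filter_upwards [mem_nhdsWithin_of_mem_nhds (Iio_mem_nhds (show -(1/(4*ε)) < -(1/8) by linarith))] with t ht
    exact (h0 t (le_of_lt ht)).symm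
  · have l : Tendsto (fun t => -(2 * ε * t - 1/2)) (𝓝[<] (1/(4*ε))) (𝓝[>] 0) := by
      refine tendsto_nhdsWithin_iff.2 ⟨?_, ?_⟩
      · have : Continuous (fun t => -(2 * ε * t - 1/2)) := by fun_prop
        have := this.tendsto (1/(4*ε))
        rw [show -(2 * ε * (1/(4*ε)) - 1/2) = 0 by linarith] at this
        exact this.mono_left nhdsWithin_le_nhds
      · filter_upwards [self_mem_nhdsWithin] with t ht
        have := mul_lt_mul_of_pos_left (mem_Iio.1 ht) hε
        simp only [mem_Ioi]
        nlinarith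
    refine (tendsto_neg_atTop_atBot.comp
      ((cth_tendsto.comp l).const_mul_atTop (show 0 < 3 * ε by positivity))).congr' ?_
    filter_upwards [mem_nhdsWithin_of_mem_nhds (Ioi_mem_nhds he)] with t ht
    rw [h1 t (le_of_lt ht)]
    simp only [Function.comp, cth_neg]
    ring
  · intro t ht
    rw [h1 t ht.1]
    exact mul_neg_of_pos_of_neg (by positivity)
      (cth_lt_zero (dom hε ⟨by linarith [ht.1], ht.2⟩).2)
end

section
/- For every κ > 0, every T > 0, and all real numbers H₋ and H₊, there exist real numbers α < −T and β > T and a smooth function μ : [α, β] → ℝ such that: (i) μ′(t) ≤ 0 for all t ∈ [α, β]; (ii) μ(α) > H₋ and μ(β) < H₊; (iii) −(4/3)·μ(t)² − 2·μ′(t) ≤ 12κ for all t ∈ (−T, T); and (iv) −(4/3)·μ(t)² − 2·μ′(t) ≤ 0 for all t ∈ [α, −T] ∪ [T, β]. -/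
theorem aux_w (T : ℝ) (hT : 0 < T) : ∃ s w s' : ℝ → ℝ,
    ContDiff ℝ (⊤ : ℕ∞) s ∧ ContDiff ℝ (⊤ : ℕ∞) w ∧ Continuous s' ∧
    (∀ t, HasDerivAt s (s' t) t) ∧ (∀ t, HasDerivAt w (s t) t) ∧
    (∀ t, 0 ≤ s' t) ∧ (∀ t, T ≤ t → s' t = 0 ∧ s t = 1 ∧ w t = w T + (t - T)) ∧
    (∀ t, t ≤ -T → s' t = 0 ∧ s t = -1 ∧ w t = w (-T) + (-T - t)) := by
  let s : ℝ → ℝ := fun t => 2 * Real.smoothTransition ((t + T) / (2 * T)) - 1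
  have hs : ContDiff ℝ (⊤ : ℕ∞) s := by
    have h : ContDiff ℝ (⊤ : ℕ∞) (fun t : ℝ => (t + T) / (2 * T)) := by fun_prop
    exact (contDiff_const.mul (Real.smoothTransition.contDiff.comp h)).sub contDiff_const
  have hmono : Monotone s := by
    intro a b hab
    have : Real.smoothTransition ((a + T) / (2 * T)) ≤ Real.smoothTransition ((b + T) / (2 * T)) :=
      Real.smoothTransition.monotone (by gcongr)
    simp only [s]; linarith
  have hs1 : ∀ t, T ≤ t → s t = 1 := by
    intro t ht
    have : Real.smoothTransition ((t + T) / (2 * T)) = 1 :=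
      Real.smoothTransition.one_of_one_le (by rw [le_div_iff₀ (by positivity)]; linarith)
    simp only [s, this]; norm_num
  have hs2 : ∀ t, t ≤ -T → s t = -1 := by
    intro t ht
    have : Real.smoothTransition ((t + T) / (2 * T)) = 0 :=
      Real.smoothTransition.zero_of_nonpos (div_nonpos_of_nonpos_of_nonneg (by linarith) (by positivity))
    simp only [s, this]; norm_num
  have hle : ∀ t, s t ≤ 1 := fun t => by
    have := Real.smoothTransition.le_one ((t + T) / (2 * T))
    simp only [s]; linarith
  have hge : ∀ t, -1 ≤ s t := fun t => by
    have := Real.smoothTransition.nonneg ((t + T) / (2 * T))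
    simp only [s]; linarith
  clear_value s
  have hsc : Continuous s := hs.continuous
  have hw : ∀ t, HasDerivAt (fun t => ∫ x in (0:ℝ)..t, s x) (s t) t := fun t =>
    intervalIntegral.integral_hasDerivAt_right (hsc.intervalIntegrable _ _)
      (hsc.stronglyMeasurableAtFilter _ _) hsc.continuousAt
  have hsplit : ∀ a t, (∫ x in (0:ℝ)..t, s x) = (∫ x in (0:ℝ)..a, s x) + ∫ x in a..t, s x := fun a t =>
    (intervalIntegral.integral_add_adjacent_intervals (hsc.intervalIntegrable _ _)
      (hsc.intervalIntegrable _ _)).symm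
  refine ⟨s, fun t => ∫ x in (0:ℝ)..t, s x, deriv s, hs, ?_, ?_, ?_, hw, ?_, ?_, ?_⟩
  · rw [contDiff_infty_iff_deriv]
    refine ⟨fun t => (hw t).differentiableAt, ?_⟩
    rw [show deriv (fun t => ∫ x in (0:ℝ)..t, s x) = s from funext fun t => (hw t).deriv]
    exact hs
  · exact hs.continuous_deriv (by simp)
  · intro t
    exact ((hs.differentiable (by simp)) t).hasDerivAt
  · intro t
    exact hmono.deriv_nonneg
  · intro t ht
    refine ⟨IsLocalMax.deriv_eq_zero (Filter.Eventually.of_forall fun x => ?_), hs1 t ht, ?_⟩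
    · rw [hs1 t ht]; exact hle x
    · change (∫ x in (0:ℝ)..t, s x) = (∫ x in (0:ℝ)..T, s x) + _
      rw [hsplit T t, intervalIntegral.integral_congr (a := T) (b := t) (g := fun _ => (1:ℝ))]
      · simp
      · intro x hx
        rw [Set.uIcc_of_le ht] at hx
        exact hs1 x hx.1
  · intro t ht
    refine ⟨IsLocalMin.deriv_eq_zero (Filter.Eventually.of_forall fun x => ?_), hs2 t ht, ?_⟩
    · rw [hs2 t ht]; exact hge x
    · change (∫ x in (0:ℝ)..t, s x) = (∫ x in (0:ℝ)..(-T), s x) + _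
      rw [hsplit (-T) t, intervalIntegral.integral_congr (a := -T) (b := t) (g := fun _ => (-1:ℝ))]
      · simp; ring
      · intro x hx
        rw [Set.uIcc_of_ge ht] at hx
        exact hs2 x hx.2

/-- Existence of the smoothed profile function `μ_κ`: for every `κ > 0`,
`T > 0` and prescribed mean-curvature bounds `H₋, H₊`, there are `α < −T`,
`β > T` and a smooth nonincreasing function `μ` on `[α, β]` with
`μ(α) > H₋`, `μ(β) < H₊`, satisfying `−(4/3) μ² − 2 μ' ≤ 12κ` on `(−T, T)`
and `−(4/3) μ² − 2 μ' ≤ 0` on `[α, −T] ∪ [T, β]`. -/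
theorem stmt_8 (κ : ℝ) (hκ : 0 < κ) (T : ℝ) (hT : 0 < T) (Hneg Hpos : ℝ) :
    ∃ α β : ℝ, ∃ μ : ℝ → ℝ,
      α < -T ∧ T < β ∧
      ContDiffOn ℝ (⊤ : ℕ∞) μ (Set.Icc α β) ∧
      (∀ t ∈ Set.Icc α β, derivWithin μ (Set.Icc α β) t ≤ 0) ∧
      Hneg < μ α ∧ μ β < Hpos ∧
      (∀ t ∈ Set.Ioo (-T) T,
        -(4/3) * (μ t)^2 - 2 * derivWithin μ (Set.Icc α β) t ≤ 12 * κ) ∧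
      (∀ t ∈ Set.Icc α (-T) ∪ Set.Icc T β,
        -(4/3) * (μ t)^2 - 2 * derivWithin μ (Set.Icc α β) t ≤ 0) := by
  obtain ⟨s, w, s', hs, hw, hs'c, hds, hdw, hs'0, hR, hL⟩ := aux_w T hT
  obtain ⟨C, hC⟩ := (isCompact_Icc (a := -T) (b := T)).exists_bound_of_continuousOn hs'c.continuousOn
  obtain ⟨M, hM⟩ := (isCompact_Icc (a := -T) (b := T)).exists_bound_of_continuousOn
    hw.continuous.continuousOn
  have hC0 : 0 ≤ C := (norm_nonneg _).trans (hC T ⟨by linarith, le_rfl⟩)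
  have hD0 : 0 ≤ C / (4 * κ) := by positivity
  obtain ⟨b, hb⟩ : ∃ b, b = M + 1 + C / (4 * κ) := ⟨_, rfl⟩
  have hA : 0 < 2 + |Hneg| + |Hpos| := by positivity
  obtain ⟨ε, hε⟩ : ∃ ε, ε = 1 / (2 + |Hneg| + |Hpos|) := ⟨_, rfl⟩
  have hε0 : 0 < ε := by rw [hε]; positivity
  have hε1 : ε < 1 := by
    rw [hε, div_lt_one hA]
    linarith [abs_nonneg Hneg, abs_nonneg Hpos]
  have hεA : 1 / ε = 2 + |Hneg| + |Hpos| := by rw [hε, one_div_one_div]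
  have hmid : ∀ t ∈ Set.Icc (-T) T, 1 + C / (4 * κ) ≤ b - w t := by
    intro t ht
    have := (abs_le.1 (hM t ht)).2
    linarith
  have hmT := hmid T ⟨by linarith, le_rfl⟩
  have hmT' := hmid (-T) ⟨le_rfl, by linarith⟩
  obtain ⟨β, hβ⟩ : ∃ β, β = T + (b - w T) - ε := ⟨_, rfl⟩
  obtain ⟨α, hα⟩ : ∃ α, α = -T - (b - w (-T)) + ε := ⟨_, rfl⟩
  have hαT : α < -T := by linarith
  have hβT : T < β := by linarith
  have hu : ∀ t ∈ Set.Icc α β, ε ≤ b - w t := by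
    intro t ht
    rcases le_total t (-T) with h | h
    · have := (hL t h).2.2
      linarith [ht.1]
    · rcases le_total t T with h2 | h2
      · linarith [hmid t ⟨h, h2⟩]
      · have := (hR t h2).2.2
        linarith [ht.2]
  have hd : ∀ t ∈ Set.Icc α β, derivWithin (fun t => -(3/2) * s t / (b - w t)) (Set.Icc α β) t =
      -(3/2) * (s' t / (b - w t) + s t ^ 2 / (b - w t) ^ 2) := by
    intro t ht
    have h0 : b - w t ≠ 0 := by
      have : 0 < b - w t := by linarith [hu t ht]
      exact this.ne'
    have h1 := ((hds t).const_mul (-(3/2))).div ((hdw t).const_sub b) h0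
    have h2 := h1.hasDerivWithinAt.derivWithin
      (uniqueDiffOn_Icc (show α < β by linarith) t ht)
    refine Eq.trans h2 ?_
    field_simp
    ring
  have hkey : ∀ t ∈ Set.Icc α β, -(4/3) * (-(3/2) * s t / (b - w t))^2 -
      2 * derivWithin (fun t => -(3/2) * s t / (b - w t)) (Set.Icc α β) t
      = 3 * (s' t / (b - w t)) := by
    intro t ht
    rw [hd t ht]
    generalize b - w t = u
    ring
  refine ⟨α, β, fun t => -(3/2) * s t / (b - w t), hαT, hβT, ?_, ?_, ?_, ?_, ?_, ?_⟩
  · refine ContDiffOn.div (contDiff_const.mul hs).contDiffOn (contDiff_const.sub hw).contDiffOn ?_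
    intro t ht
    have : 0 < b - w t := by linarith [hu t ht]
    exact this.ne'
  · intro t ht
    rw [hd t ht]
    have h0 : 0 < b - w t := by linarith [hu t ht]
    have h1 := hs'0 t
    have : 0 ≤ s' t / (b - w t) + s t ^ 2 / (b - w t) ^ 2 := by positivity
    linarith
  · have h := hL α hαT.le
    have e : b - w α = ε := by rw [h.2.2]; linarith
    change Hneg < -(3/2) * s α / (b - w α)
    rw [e, h.2.1, show -(3/2) * (-1) / ε = 3/2 * (1/ε) by ring, hεA]
    linarith [le_abs_self Hneg, abs_nonneg Hneg, abs_nonneg Hpos]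
  · have h := hR β hβT.le
    have e : b - w β = ε := by rw [h.2.2]; linarith
    change -(3/2) * s β / (b - w β) < Hpos
    rw [e, h.2.1, show -(3/2) * 1 / ε = -(3/2) * (1/ε) by ring, hεA]
    linarith [neg_abs_le Hpos, abs_nonneg Hneg, abs_nonneg Hpos]
  · intro t ht
    refine (hkey t ⟨by linarith [ht.1], by linarith [ht.2]⟩).le.trans ?_
    have h1 := hmid t ⟨ht.1.le, ht.2.le⟩
    have h2 : s' t ≤ C := (abs_le.1 (hC t ⟨ht.1.le, ht.2.le⟩)).2
    have h3 : s' t / (b - w t) ≤ 4 * κ := by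
      rw [div_le_iff₀ (by linarith)]
      calc s' t ≤ C := h2
        _ = 4 * κ * (C / (4 * κ)) := by field_simp
        _ ≤ 4 * κ * (b - w t) := by gcongr; linarith
    linarith
  · intro t ht
    have h : t ∈ Set.Icc α β ∧ s' t = 0 := by
      rcases ht with h | h
      · exact ⟨⟨h.1, by linarith [h.2]⟩, (hL t h.2).1⟩
      · exact ⟨⟨by linarith [h.1], h.2⟩, (hR t h.1).1⟩
    refine (hkey t h.1).le.trans ?_
    rw [h.2]; simp
end
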